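/- Let T ⊆ 𝔹, β ∈ 𝔹(T), and suppose {σ^iβ : 0 < i < n_β} ∩ (T̃ − T) = {σ^{r₁}β, …, σ^{r_t}β} with t ≥ 1 and 0 < r₁ < ⋯ < r_t < n_β. Then h_{σ^{r_t}β} ∈ 𝒟_{T,f_β} and f_{σ^{n_β}β}(T) ∈ 𝒟_{T,f_β}. -/

import Mathlib

/- Setting: `B` is the finite nonempty set 𝔹 equipped with a permutation `σ` (Frobenius),
and `p` is a prime.  Weights live in `ℚ^𝔹 = (B → ℚ)`.  The orbits `𝔹_𝔭` of `σ` are the sets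
`orbit σ β`, and for `T ⊆ 𝔹` we have `T_𝔭 = T ∩ orbit σ β`. -/

open scoped Classical

noncomputable section

namespace GO

variable {B : Type*} [Fintype B] [DecidableEq B]

/-- The standard basis vector `e_β` of `ℚ^𝔹`. -/
def e (β : B) : B → ℚ := fun τ => if τ = β then 1 else 0

/-- `β'` lies in the `σ`-orbit of `β`. -/
def sameOrbit (σ : Equiv.Perm B) (β β' : B) : Prop := ∃ n : ℕ, (σ ^ n) β = β'

/-- The `σ`-orbit `𝔹_𝔭` of `β`. -/
def orbit (σ : Equiv.Perm B) (β : B) : Set B := {τ | sameOrbit σ β τ}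

/-- `|𝔹_𝔭|`, the cardinality of the orbit of `β`. -/
def orbitCard (σ : Equiv.Perm B) (β : B) : ℕ := (orbit σ β).ncard

/-- For `β`, `β'` in the same orbit: the unique `n` with `0 < n ≤ |𝔹_𝔭|` and `σ^n β' = β`,
realized as the least positive `n` with `σ^n β' = β`. -/
def steps (σ : Equiv.Perm B) (β' β : B) : ℕ := sInf {n : ℕ | 0 < n ∧ (σ ^ n) β' = β}

/-- For `β`, `β'` in the same orbit: the unique `n` with `0 ≤ n < |𝔹_𝔭|` and `σ^n β = β'`. -/
def steps0 (σ : Equiv.Perm B) (β β' : B) : ℕ := sInf {n : ℕ | (σ ^ n) β = β'}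

/-- `h_β^{β'} = -e_β + p^n e_{β'}` where `β = σ^n β'` with `0 < n ≤ |𝔹_𝔭|`. -/
def hvec (σ : Equiv.Perm B) (p : ℕ) (β β' : B) : B → ℚ :=
  -(e β) + ((p : ℚ) ^ steps σ β' β) • e β'

/-- `b_β^{β'} = e_β + p^n e_{β'}` where `β = σ^n β'` with `0 < n ≤ |𝔹_𝔭|`. -/
def bvec (σ : Equiv.Perm B) (p : ℕ) (β β' : B) : B → ℚ :=
  (e β) + ((p : ℚ) ^ steps σ β' β) • e β'

/-- `h_β = -e_β + p e_{σ⁻¹ β}`. -/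
def hsimple (σ : Equiv.Perm B) (p : ℕ) (β : B) : B → ℚ := -(e β) + (p : ℚ) • e (σ⁻¹ β)

/-- `b_β = e_β + p e_{σ⁻¹ β}`. -/
def bsimple (σ : Equiv.Perm B) (p : ℕ) (β : B) : B → ℚ := (e β) + (p : ℚ) • e (σ⁻¹ β)

/-- The `ℚ^{≥0}`-cone generated by a set `S` of vectors: all finite nonnegative rational
linear combinations of elements of `S`. -/
def cone {V : Type*} [AddCommMonoid V] [Module ℚ V] (S : Set V) : Set V :=
  {x | ∃ (n : ℕ) (c : Fin n → ℚ) (v : Fin n → V),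
    (∀ i, 0 ≤ c i) ∧ (∀ i, v i ∈ S) ∧ x = ∑ i, c i • v i}

/-- A chain in `T` (automatically contained in a single orbit, so this is the notion of a
chain in `T_𝔭` for `T_𝔭 ⊊ 𝔹_𝔭`): `C = {σ^{-i}β : 0 ≤ i ≤ m} ⊆ T` with `σβ ∉ T` and
`σ^{-m-1}β ∉ T`. -/
def IsChainIn (σ : Equiv.Perm B) (T : Set B) (C : Set B) : Prop :=
  ∃ (β : B) (m : ℕ), σ β ∉ T ∧ (σ⁻¹ ^ (m + 1)) β ∉ T ∧
    (∀ i ≤ m, (σ⁻¹ ^ i) β ∈ T) ∧ C = {τ | ∃ i ≤ m, τ = (σ⁻¹ ^ i) β}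

/-- `C̃` for a chain `C`: equals `C` if `m` is odd (i.e. `|C| = m+1` is even), and
`C ∪ {σ^{-m-1}β} = C ∪ σ⁻¹(C)` if `m` is even (i.e. `|C|` odd). -/
def chainExt (σ : Equiv.Perm B) (C : Set B) : Set B :=
  if Odd C.ncard then C ∪ (⇑σ⁻¹ '' C) else C

/-- `T̃ = ⋃_𝔭 T̃_𝔭`: the union of `T` with the extensions `C̃` of all chains `C` in `T`.
(For orbits with `T_𝔭 = 𝔹_𝔭` there are no chains and `T̃_𝔭 = 𝔹_𝔭 = T_𝔭`.) -/
def tilde (σ : Equiv.Perm B) (T : Set B) : Set B :=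
  T ∪ ⋃ (C : Set B) (_ : IsChainIn σ T C), chainExt σ C

/-- `μ_β`: the least `i > 0` with `σ^i β ∉ T` if `T_𝔭 ≠ 𝔹_𝔭`, and `0` if `T_𝔭 = 𝔹_𝔭`. -/
def mu (σ : Equiv.Perm B) (T : Set B) (β : B) : ℕ :=
  if orbit σ β ⊆ T then 0 else sInf {i : ℕ | 0 < i ∧ (σ ^ i) β ∉ T}

/-- `n_β`: the least `i > 0` with `σ^i β ∉ T̃` (meaningful when `T̃_𝔭 ≠ 𝔹_𝔭`). -/
def nn (σ : Equiv.Perm B) (T : Set B) (β : B) : ℕ :=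
  sInf {i : ℕ | 0 < i ∧ (σ ^ i) β ∉ tilde σ T}

/-- `ν_β`: the least `i ≥ 0` with `σ^{-i} β ∉ T` (meaningful when `T_𝔭 ≠ 𝔹_𝔭`). -/
def nu (σ : Equiv.Perm B) (T : Set B) (β : B) : ℕ :=
  sInf {i : ℕ | (σ⁻¹ ^ i) β ∉ T}

/-- `𝒯(T_𝔭) = (𝔹_𝔭 − T̃_𝔭) ∪ σ(T̃_𝔭 − T_𝔭)`, taken globally (union over all `𝔭`). -/
def Tscr (σ : Equiv.Perm B) (T : Set B) : Set B :=
  (tilde σ T)ᶜ ∪ (⇑σ '' (tilde σ T \ T))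

/-- The generating set `⋃_𝔭 𝒢(T_𝔭)`:
`{h_β^{β'} : β ∈ ℋ(T_𝔭), β' ∈ 𝒯(T_𝔭)} ∪ {±b_β : β ∈ T_𝔭}` over all `𝔭`. -/
def Dgen (σ : Equiv.Perm B) (p : ℕ) (T : Set B) : Set (B → ℚ) :=
  {v | ∃ β β', β ∉ T ∧ β' ∈ Tscr σ T ∧ sameOrbit σ β β' ∧ v = hvec σ p β β'}
  ∪ {v | ∃ β ∈ T, v = bsimple σ p β ∨ v = -(bsimple σ p β)}

/-- The cone `𝒟_T`. -/
def D (σ : Equiv.Perm B) (p : ℕ) (T : Set B) : Set (B → ℚ) := cone (Dgen σ p T)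

/-- `h_{σ^{n_β}β}^{β} = -e_{σ^{n_β}β} + p^{n_β} e_β`. -/
def fH (σ : Equiv.Perm B) (p : ℕ) (T : Set B) (β : B) : B → ℚ :=
  -(e ((σ ^ nn σ T β) β)) + ((p : ℚ) ^ nn σ T β) • e β

/-- `b_{σ^{n_β}β}^{β} = e_{σ^{n_β}β} + p^{n_β} e_β`. -/
def fB (σ : Equiv.Perm B) (p : ℕ) (T : Set B) (β : B) : B → ℚ :=
  (e ((σ ^ nn σ T β) β)) + ((p : ℚ) ^ nn σ T β) • e β

/-- The generating set `⋃_𝔭 𝒢′(T_𝔭)`: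
if `𝔹_𝔭 − T̃_𝔭 ≠ ∅` it is `{h_{σ^{n_β}β}^β : β ∈ 𝔹_𝔭 − T̃_𝔭} ∪ {−b_{σ^{n_β}β}^β : β ∈ T̃_𝔭 − T_𝔭}
∪ {±b_β : β ∈ T_𝔭}`, and if `𝔹_𝔭 = T̃_𝔭` it is `{−e_β : β ∈ 𝔹_𝔭 − T_𝔭} ∪ {±b_β : β ∈ T_𝔭}`. -/
def D'gen (σ : Equiv.Perm B) (p : ℕ) (T : Set B) : Set (B → ℚ) :=
  {v | ∃ β, β ∉ tilde σ T ∧ v = fH σ p T β}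
  ∪ {v | ∃ β, β ∈ tilde σ T ∧ β ∉ T ∧ ¬ orbit σ β ⊆ tilde σ T ∧ v = -(fB σ p T β)}
  ∪ {v | ∃ β, β ∉ T ∧ orbit σ β ⊆ tilde σ T ∧ v = -(e β)}
  ∪ {v | ∃ β ∈ T, v = bsimple σ p β ∨ v = -(bsimple σ p β)}

/-- The cone `𝒟′_T`. -/
def D' (σ : Equiv.Perm B) (p : ℕ) (T : Set B) : Set (B → ℚ) := cone (D'gen σ p T)

/-- `f_β(T)` for `β ∉ T`: `h_{σ^{n_β}β}^β` if `β ∈ 𝔹_𝔭 − T̃_𝔭`; `−b_{σ^{n_β}β}^β` if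
`β ∈ T̃_𝔭 − T_𝔭` and `𝔹_𝔭 ≠ T̃_𝔭`; and `−(1+p^{|𝔹_𝔭|}) e_β` if `𝔹_𝔭 = T̃_𝔭`. -/
def fvec (σ : Equiv.Perm B) (p : ℕ) (T : Set B) (β : B) : B → ℚ :=
  if orbit σ β ⊆ tilde σ T then -((1 + (p : ℚ) ^ orbitCard σ β) • e β)
  else if β ∈ tilde σ T then -(fB σ p T β) else fH σ p T β

/-- `𝔹(T) = ⋃_𝔭 𝔹_𝔭(T)`: `β ∈ 𝔹(T)` iff `β ∉ T`, the set `𝔹_𝔭 − T̃_𝔭` is nonempty, and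
`𝔹_𝔭 − T̃_𝔭 ≠ {β}` (this encodes all three cases of the definition of `𝔹_𝔭(T)`). -/
def BT (σ : Equiv.Perm B) (T : Set B) : Set B :=
  {β | β ∉ T ∧ (orbit σ β \ tilde σ T).Nonempty ∧ orbit σ β \ tilde σ T ≠ {β}}

/-- The sign function `ε_T : 𝔹 → {−1,0,1}`. -/
def epsT (σ : Equiv.Perm B) (T : Set B) (β : B) : ℚ :=
  if orbit σ β ⊆ T then 0
  else if β ∈ tilde σ T then (-1 : ℚ) ^ (mu σ T β - 1) else 1

/-- `L^ε[β, β'](κ) = Σ_{0 ≤ i ≤ n} ε(σ^iβ) p^i k_{σ^iβ}`, where `β' = σ^n β` with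
`0 ≤ n < |𝔹_𝔭|`. -/
def Lfun (σ : Equiv.Perm B) (p : ℕ) (ε : B → ℚ) (β β' : B) (κ : B → ℚ) : ℚ :=
  ∑ i ∈ Finset.range (steps0 σ β β' + 1), ε ((σ ^ i) β) * (p : ℚ) ^ i * κ ((σ ^ i) β)

/-- `L^ε[β] = L^ε[β, σ⁻¹β]`. -/
def Lfun1 (σ : Equiv.Perm B) (p : ℕ) (ε : B → ℚ) (β : B) (κ : B → ℚ) : ℚ :=
  Lfun σ p ε β (σ⁻¹ β) κ

/-- `L_{T,β}` for `β ∈ 𝔹 − T`: `L^{ε_T}[σ^{μ_β}β]` if `β ∈ 𝔹 − T̃`, and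
`L^{ε_T}[β, σ^{μ_β−1}β]` if `β ∈ T̃ − T`. -/
def LT (σ : Equiv.Perm B) (p : ℕ) (T : Set B) (β : B) (κ : B → ℚ) : ℚ :=
  if β ∈ tilde σ T then Lfun σ p (epsT σ T) β ((σ ^ (mu σ T β - 1)) β) κ
  else Lfun1 σ p (epsT σ T) ((σ ^ mu σ T β) β) κ

/-- `ε_{T,f_β}`: negates `ε_T` on `{β, σβ, …, σ^{μ_β−1}β}`. -/
def epsTf (σ : Equiv.Perm B) (T : Set B) (β τ : B) : ℚ :=
  if ∃ i < mu σ T β, τ = (σ ^ i) β then -(epsT σ T τ) else epsT σ T τ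

/-- `L_{T,f_β,τ}` for `β ∈ 𝔹(T)` and `τ ∈ 𝔹 − (T ∪ {σ^{n_β}β})`, with `β′ = σ^{n_β}β` and
`β̃ = σ^{μ_{β′}}β′`. -/
def LTf (σ : Equiv.Perm B) (p : ℕ) (T : Set B) (β τ : B) (κ : B → ℚ) : ℚ :=
  if τ = β then
    (if β ∈ tilde σ T then
      Lfun1 σ p (epsTf σ T β) ((σ ^ mu σ T ((σ ^ nn σ T β) β)) ((σ ^ nn σ T β) β)) κ
    else
      Lfun σ p (epsTf σ T β) β (σ⁻¹ ((σ ^ mu σ T ((σ ^ nn σ T β) β)) ((σ ^ nn σ T β) β))) κ)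
  else
    (if τ ∈ tilde σ T then LT σ p T τ κ
     else Lfun1 σ p (epsTf σ T β) ((σ ^ mu σ T τ) τ) κ)

/-- `𝒟_{T,f_β} = {κ : L_{T,f_β,τ}(κ) ≥ 0 for all τ ∈ 𝔹 − (T ∪ {σ^{n_β}β})}`. -/
def Df (σ : Equiv.Perm B) (p : ℕ) (T : Set B) (β : B) : Set (B → ℚ) :=
  {κ | ∀ τ, τ ∉ T → τ ≠ (σ ^ nn σ T β) β → 0 ≤ LTf σ p T β τ κ}

/-- `i_T : ℚ^𝔹 → ℚ^{𝔹−T}`, the linear map with `i_T(e_β) = 0` if `T_𝔭 = 𝔹_𝔭` and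
`i_T(e_β) = (−p)^{ν_β} e_{σ^{−ν_β}β}` otherwise. -/
def iT (σ : Equiv.Perm B) (p : ℕ) (T : Set B) (κ : B → ℚ) : {β : B // β ∉ T} → ℚ :=
  fun β₀ => ∑ β : B, κ β *
    (if orbit σ β ⊆ T then 0
     else if (σ⁻¹ ^ nu σ T β) β = β₀.1 then (-(p : ℚ)) ^ nu σ T β else 0)

/-- Restriction to `ℚ^{𝔹−T}` of a vector of `ℚ^𝔹` (used for vectors supported on `𝔹 − T`). -/
def res (T : Set B) (v : B → ℚ) : {β : B // β ∉ T} → ℚ := fun β => v β.1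

/-- The generating set `𝒢^{T-red}(T) = ⋃_𝔭 𝒢_𝔭^{T-red}(T)` of the reduced cone. -/
def Gred (σ : Equiv.Perm B) (p : ℕ) (T : Set B) : Set ({β : B // β ∉ T} → ℚ) :=
  {v | ∃ β, β ∉ tilde σ T ∧ v = res T (fH σ p T β)}
  ∪ {v | ∃ β, β ∈ tilde σ T ∧ β ∉ T ∧ ¬ orbit σ β ⊆ tilde σ T ∧ v = res T (-(fB σ p T β))}
  ∪ {v | ∃ β, β ∉ T ∧ orbit σ β ⊆ tilde σ T ∧ v = res T (-(e β))}

/-- The minimal cone `𝒞^min_T = i_T(𝒟_T ∩ ⋂_{β ∈ 𝔹(T)} 𝒟_{T,f_β}) ⊆ ℚ^{𝔹−T}`. -/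
def Cmin (σ : Equiv.Perm B) (p : ℕ) (T : Set B) : Set ({β : B // β ∉ T} → ℚ) :=
  iT σ p T '' (D σ p T ∩ {κ | ∀ β ∈ BT σ T, κ ∈ Df σ p T β})

/-- `g_β`: `b_β` if `β ∈ T_𝔭`; `−e_β` if `β ∈ T̃_𝔭 − T_𝔭` and `𝔹_𝔭 = T̃_𝔭`;
`−b_{σ^{n_β}β}^β` if `β ∈ T̃_𝔭 − T_𝔭` and `𝔹_𝔭 ≠ T̃_𝔭`; `h_{σ^{n_β}β}^β` if `β ∈ 𝔹_𝔭 − T̃_𝔭`. -/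
def gvec (σ : Equiv.Perm B) (p : ℕ) (T : Set B) (β : B) : B → ℚ :=
  if β ∈ T then bsimple σ p β
  else if orbit σ β ⊆ tilde σ T then -(e β)
  else if β ∈ tilde σ T then -(fB σ p T β)
  else fH σ p T β

/-- The map `σ̄ : β ↦ σ^{n_β} β`. -/
def sigbar (σ : Equiv.Perm B) (T : Set B) (β : B) : B := (σ ^ nn σ T β) β

/-- `h_β = -e_β + p e_{σ⁻¹β}` as an element of `ℤ^𝔹`. -/
def hZ (σ : Equiv.Perm B) (p : ℕ) (β : B) : B → ℤ :=
  fun τ => (if τ = β then -1 else 0) + (if τ = σ⁻¹ β then (p : ℤ) else 0)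

end GO

end

namespace GO

section aux
set_option linter.unusedSectionVars false
variable {B : Type*} [Fintype B] [DecidableEq B]

lemma pow_cancel (σ : Equiv.Perm B) {i j : ℕ} (h : i ≤ j) {x y : B}
    (hxy : (σ ^ i) x = (σ ^ j) y) : x = (σ ^ (j - i)) y := by
  apply (σ ^ i).injective
  rw [hxy, ← Equiv.Perm.mul_apply, ← pow_add]
  congr 2
  omega

lemma pow_mod' (σ : Equiv.Perm B) {i : ℕ} {x : B} (h : (σ ^ i) x = x) (k : ℕ) :
    (σ ^ (k % i)) x = (σ ^ k) x := by
  have h2 : ∀ q : ℕ, (σ ^ (i * q)) x = x := by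
    intro q
    induction q with
    | zero => simp
    | succ q ih => rw [Nat.mul_succ, pow_add, Equiv.Perm.mul_apply, h, ih]
  conv_rhs => rw [← Nat.mod_add_div k i, pow_add, Equiv.Perm.mul_apply, h2]

lemma so_pow (σ : Equiv.Perm B) (a : B) (i : ℕ) : sameOrbit σ a ((σ ^ i) a) := ⟨i, rfl⟩

lemma so_trans {σ : Equiv.Perm B} {a b c : B} (h : sameOrbit σ a b) (h' : sameOrbit σ b c) :
    sameOrbit σ a c := by
  obtain ⟨i, rfl⟩ := h
  obtain ⟨j, rfl⟩ := h'
  exact ⟨j + i, by rw [pow_add, Equiv.Perm.mul_apply]⟩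

lemma exists_period (σ : Equiv.Perm B) (a : B) : ∃ n, 0 < n ∧ (σ ^ n) a = a :=
  ⟨orderOf σ, orderOf_pos σ, by rw [pow_orderOf_eq_one]; rfl⟩

lemma so_symm {σ : Equiv.Perm B} {a b : B} (h : sameOrbit σ a b) : sameOrbit σ b a := by
  obtain ⟨i, rfl⟩ := h
  obtain ⟨n, hn, hna⟩ := exists_period σ a
  have hle : i ≤ n * (i + 1) := by nlinarith
  have h2 : (σ ^ (n * (i + 1))) a = a := by
    have := pow_mod' σ hna (n * (i + 1))
    simpa using this.symm
  refine ⟨n * (i + 1) - i, ?_⟩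
  rw [← Equiv.Perm.mul_apply, ← pow_add, Nat.sub_add_cancel hle, h2]

lemma so_inv (σ : Equiv.Perm B) (a : B) : sameOrbit σ a (σ⁻¹ a) :=
  so_symm ⟨1, by simp⟩

lemma steps0_spec {σ : Equiv.Perm B} {a b : B} (h : sameOrbit σ a b) :
    (σ ^ steps0 σ a b) a = b := Nat.sInf_mem (s := {n : ℕ | (σ ^ n) a = b}) h

lemma steps0_le {σ : Equiv.Perm B} {a b : B} {n : ℕ} (h : (σ ^ n) a = b) :
    steps0 σ a b ≤ n := Nat.sInf_le h

lemma steps0_le_inv {σ : Equiv.Perm B} {a x : B} (h : sameOrbit σ a x) :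
    steps0 σ a x ≤ steps0 σ a (σ⁻¹ a) := by
  have hk := steps0_spec (so_inv σ a)
  set k := steps0 σ a (σ⁻¹ a)
  have h1 : (σ ^ (k + 1)) a = a := by
    rw [pow_succ', Equiv.Perm.mul_apply, hk]; simp
  obtain ⟨i, hi⟩ := h
  have := steps0_le ((pow_mod' σ h1 i).trans hi)
  have := Nat.mod_lt i (Nat.succ_pos k)
  simp only [Nat.succ_eq_add_one] at this
  omega

lemma Lfun_add (σ : Equiv.Perm B) (p : ℕ) (ε : B → ℚ) (a b : B) (c d : ℚ) (x y : B) :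
    Lfun σ p ε a b (c • e x + d • e y) =
      c * Lfun σ p ε a b (e x) + d * Lfun σ p ε a b (e y) := by
  simp only [Lfun, Finset.mul_sum, ← Finset.sum_add_distrib]
  apply Finset.sum_congr rfl
  intro i _
  simp only [Pi.add_apply, Pi.smul_apply, smul_eq_mul]
  ring

lemma Lfun_e {σ : Equiv.Perm B} (p : ℕ) (ε : B → ℚ) {a b x : B} (hb : sameOrbit σ a b)
    (hx : sameOrbit σ a x) : Lfun σ p ε a b (e x) =
      if steps0 σ a x ≤ steps0 σ a b then ε x * (p : ℚ) ^ steps0 σ a x else 0 := by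
  have hbs := steps0_spec hb
  have hxs := steps0_spec hx
  have key : ∀ i ≤ steps0 σ a b, (σ ^ i) a = x → i = steps0 σ a x := by
    intro i hi hix
    have h1 := steps0_le hix
    by_contra hne
    have hlt : steps0 σ a x < i := by omega
    have h2 : (σ ^ steps0 σ a x) a = (σ ^ i) a := by rw [hxs, hix]
    have h3 := pow_cancel σ h1 h2
    have h4 : (σ ^ (steps0 σ a b - (i - steps0 σ a x))) a = b := by
      have h5 := congrArg (⇑(σ ^ (steps0 σ a b - (i - steps0 σ a x)))) h3
      rw [h5, ← Equiv.Perm.mul_apply, ← pow_add, Nat.sub_add_cancel (by omega), hbs]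
    have := steps0_le h4
    omega
  unfold Lfun
  split_ifs with h
  · rw [Finset.sum_eq_single (steps0 σ a x)]
    · rw [hxs]; simp [e]
    · intro i hi hne
      have : (σ ^ i) a ≠ x := fun h' => hne (key i (by simpa [Nat.lt_succ_iff] using hi) h')
      simp [e, this]
    · intro h'; exact absurd (Finset.mem_range.2 (by omega)) h'
  · apply Finset.sum_eq_zero
    intro i hi
    have : (σ ^ i) a ≠ x := fun h' => by
      have hi' : i ≤ steps0 σ a b := by simpa [Nat.lt_succ_iff] using hi
      have := key i hi' h'
      omega
    simp [e, this]

lemma Lfun_nonneg (σ : Equiv.Perm B) (p : ℕ) (ε : B → ℚ) (a b : B) (κ : B → ℚ)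
    (h : ∀ i ≤ steps0 σ a b, 0 ≤ ε ((σ ^ i) a) * κ ((σ ^ i) a)) : 0 ≤ Lfun σ p ε a b κ := by
  apply Finset.sum_nonneg
  intro i hi
  have h1 := h i (by simpa [Nat.lt_succ_iff] using hi)
  have : (0 : ℚ) ≤ (p : ℚ) ^ i := by positivity
  calc (0 : ℚ) ≤ (p : ℚ) ^ i * (ε ((σ ^ i) a) * κ ((σ ^ i) a)) := mul_nonneg this h1
    _ = _ := by ring

lemma orb_not {σ : Equiv.Perm B} {T : Set B} {x : B} (hx : ∃ y, sameOrbit σ x y ∧ y ∉ T) :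
    ¬ orbit σ x ⊆ T := by
  obtain ⟨y, h, hy⟩ := hx
  exact fun h' => hy (h' h)

lemma mu_eq {σ : Equiv.Perm B} {T : Set B} {x : B} (hx : ∃ y, sameOrbit σ x y ∧ y ∉ T) :
    mu σ T x = sInf {i : ℕ | 0 < i ∧ (σ ^ i) x ∉ T} := by
  rw [mu, if_neg (orb_not hx)]

lemma mu_spec {σ : Equiv.Perm B} {T : Set B} {x : B} (hx : x ∉ T) :
    0 < mu σ T x ∧ (σ ^ mu σ T x) x ∉ T := by
  rw [mu_eq ⟨x, ⟨0, rfl⟩, hx⟩]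
  obtain ⟨n, hn, h⟩ := exists_period σ x
  exact Nat.sInf_mem (s := {i : ℕ | 0 < i ∧ (σ ^ i) x ∉ T}) ⟨n, hn, by rwa [h]⟩

lemma mu_lt {σ : Equiv.Perm B} {T : Set B} {x : B} (hx : x ∉ T) {i : ℕ} (hi : 0 < i)
    (hi' : i < mu σ T x) : (σ ^ i) x ∈ T := by
  rw [mu_eq ⟨x, ⟨0, rfl⟩, hx⟩] at hi'
  by_contra h
  exact Nat.notMem_of_lt_sInf hi' ⟨hi, h⟩

lemma mu_one {σ : Equiv.Perm B} {T : Set B} {x : B} (hx : σ x ∉ T) : mu σ T x = 1 := by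
  rw [mu_eq ⟨σ x, ⟨1, by simp⟩, hx⟩]
  have h1 : sInf {i : ℕ | 0 < i ∧ (σ ^ i) x ∉ T} ≤ 1 := Nat.sInf_le ⟨one_pos, by simpa using hx⟩
  have h2 := Nat.sInf_mem (s := {i : ℕ | 0 < i ∧ (σ ^ i) x ∉ T}) ⟨1, one_pos, by simpa using hx⟩
  have := h2.1
  omega

lemma mu_inj {σ : Equiv.Perm B} {T : Set B} {x z : B} (hx : x ∉ T) (hz : z ∉ T)
    (h : (σ ^ mu σ T x) x = (σ ^ mu σ T z) z) : x = z := by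
  rcases lt_trichotomy (mu σ T x) (mu σ T z) with hlt | heq | hlt
  · exfalso
    have := pow_cancel σ hlt.le h
    have hp := (mu_spec (σ := σ) hx).1
    exact hx (this ▸ mu_lt hz (by omega) (by omega))
  · rw [heq] at h
    exact (σ ^ mu σ T z).injective h
  · exfalso
    have := pow_cancel σ hlt.le h.symm
    have hp := (mu_spec (σ := σ) hz).1
    exact hz (this ▸ mu_lt hx (by omega) (by omega))

lemma tilde_mu {σ : Equiv.Perm B} {T : Set B} {x : B} (hx : x ∈ tilde σ T) (hxT : x ∉ T) :
    Odd (mu σ T x - 1) := by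
  rcases hx with hx | hx
  · exact absurd hx hxT
  simp only [Set.mem_iUnion] at hx
  obtain ⟨C, ⟨γ, m, h1, h2, h3, rfl⟩, hxC⟩ := hx
  set C := {τ | ∃ i ≤ m, τ = (σ⁻¹ ^ i) γ} with hC
  have hCT : x ∉ C := by
    rintro ⟨i, hi, rfl⟩
    exact hxT (h3 i hi)
  have hcard : C.ncard = m + 1 := by
    have hCe : C = (fun i => (σ⁻¹ ^ i) γ) '' (Finset.range (m + 1) : Set ℕ) := by
      ext τ
      simp only [hC, Set.mem_setOf_eq, Set.mem_image, Finset.coe_range, Set.mem_Iio,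
        Nat.lt_succ_iff]
      constructor
      · rintro ⟨i, hi, rfl⟩; exact ⟨i, hi, rfl⟩
      · rintro ⟨i, hi, rfl⟩; exact ⟨i, hi, rfl⟩
    have hlt : ∀ i j, i < j → j ≤ m → (σ⁻¹ ^ i) γ ≠ (σ⁻¹ ^ j) γ := by
      intro i j hij hj h
      have h4 := pow_cancel σ⁻¹ hij.le h
      apply h2
      have h5 : (σ⁻¹ ^ (m + 1)) γ = (σ⁻¹ ^ (m + 1 - (j - i))) γ := by
        conv_rhs => rw [h4]
        rw [← Equiv.Perm.mul_apply, ← pow_add, Nat.sub_add_cancel (by omega)]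
      rw [h5]
      exact h3 _ (by omega)
    rw [hCe, Set.ncard_image_of_injOn, Set.ncard_coe_finset, Finset.card_range]
    intro i hi j hj h
    simp only [Finset.coe_range, Set.mem_Iio, Nat.lt_succ_iff] at hi hj
    rcases lt_trichotomy i j with h' | h' | h'
    · exact absurd h (hlt i j h' hj)
    · exact h'
    · exact absurd h.symm (hlt j i h' hi)
  unfold chainExt at hxC
  split_ifs at hxC with hodd
  · rcases hxC with hxC | ⟨y, ⟨i, hi, rfl⟩, rfl⟩
    · exact absurd hxC hCT
    · have him : i = m := by
        by_contra hne
        apply hxT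
        have := h3 (i + 1) (by omega)
        rwa [pow_succ', Equiv.Perm.mul_apply] at this
      subst him
      have hg : ∀ j ≤ i + 1, (σ ^ j) (σ⁻¹ ((σ⁻¹ ^ i) γ)) = (σ⁻¹ ^ (i + 1 - j)) γ := by
        intro j hj
        rw [← Equiv.Perm.mul_apply σ⁻¹, ← pow_succ', ← Equiv.Perm.mul_apply]
        congr 1
        rw [inv_pow, inv_pow, mul_inv_eq_iff_eq_mul, eq_comm, inv_mul_eq_iff_eq_mul,
          ← pow_add, Nat.sub_add_cancel hj]
      set x := σ⁻¹ ((σ⁻¹ ^ i) γ) with hxdef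
      have hlast : (σ ^ (i + 2)) x ∉ T := by
        rw [pow_succ', Equiv.Perm.mul_apply, hg (i + 1) le_rfl]
        simpa using h1
      have hmu : mu σ T x = i + 2 := by
        have hs := mu_spec (σ := σ) hxT
        have hle : ¬ (i + 2 < mu σ T x) := fun h => hlast (mu_lt hxT (by omega) h)
        by_contra hne
        apply hs.2
        rw [hg _ (by omega)]
        exact h3 _ (by omega)
      rw [hcard] at hodd
      rw [hmu]
      exact hodd
  · exact absurd hxC hCT

lemma eps_tilde {σ : Equiv.Perm B} {T : Set B} {x : B} (hx : x ∈ tilde σ T) (hxT : x ∉ T) :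
    epsT σ T x = -1 := by
  rw [epsT, if_neg (orb_not ⟨x, ⟨0, rfl⟩, hxT⟩), if_pos hx, (tilde_mu hx hxT).neg_one_pow]

lemma eps_pre {σ : Equiv.Perm B} {T : Set B} {x : B} (hx : σ x ∉ T) : epsT σ T x = 1 := by
  rw [epsT, if_neg (orb_not ⟨σ x, ⟨1, by simp⟩, hx⟩), mu_one hx]
  simp

lemma eps_not {σ : Equiv.Perm B} {T : Set B} {x : B} (hx : x ∉ tilde σ T) :
    epsT σ T x = 1 := by
  have hxT : x ∉ T := fun h => hx (Or.inl h)
  rw [epsT, if_neg (orb_not ⟨x, ⟨0, rfl⟩, hxT⟩), if_neg hx]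

lemma epsf_ne {σ : Equiv.Perm B} {T : Set B} {β x : B} (hβ : β ∉ T) (hx : x ∉ T) (hne : x ≠ β) :
    epsTf σ T β x = epsT σ T x := by
  rw [epsTf, if_neg]
  rintro ⟨i, hi, rfl⟩
  rcases Nat.eq_zero_or_pos i with rfl | h
  · exact hne rfl
  · exact hx (mu_lt hβ h hi)

lemma epsf_pre {σ : Equiv.Perm B} {T : Set B} {β x : B} (hβ : β ∉ T) (hx : x ∉ T) :
    epsTf σ T β (σ⁻¹ x) = 1 ∨ (epsTf σ T β (σ⁻¹ x) = -1 ∧ x = (σ ^ mu σ T β) β) := by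
  have he : epsT σ T (σ⁻¹ x) = 1 := eps_pre (by simpa using hx)
  rw [epsTf, he]
  split_ifs with h
  · right
    refine ⟨rfl, ?_⟩
    obtain ⟨i, hi, h⟩ := h
    have hxi : x = (σ ^ (i + 1)) β := by
      rw [pow_succ', Equiv.Perm.mul_apply, ← h]; simp
    have : i + 1 = mu σ T β := by
      by_contra hne
      exact hx (hxi ▸ mu_lt hβ (by omega) (by omega))
    rw [← this, hxi]
  · left; rfl

lemma epsf_le {σ : Equiv.Perm B} {T : Set B} {β x : B} (hx : x ∉ tilde σ T) :
    epsTf σ T β x ≤ 1 := by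
  rw [epsTf, eps_not hx]
  split_ifs <;> norm_num

lemma hs_eq (σ : Equiv.Perm B) (p : ℕ) (y : B) :
    hsimple σ p y = (-1 : ℚ) • e y + (p : ℚ) • e (σ⁻¹ y) := by
  simp [hsimple]

lemma Lhs_nonneg {σ : Equiv.Perm B} (p : ℕ) (ε : B → ℚ) {a b y : B} (hb : sameOrbit σ a b)
    (hy : sameOrbit σ a y) (hay : a ≠ y) (hle : steps0 σ a y ≤ steps0 σ a b)
    (h1 : ε y = -1) (h2 : -1 ≤ ε (σ⁻¹ y)) : 0 ≤ Lfun σ p ε a b (hsimple σ p y) := by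
  have hy' : sameOrbit σ a (σ⁻¹ y) := so_trans hy (so_inv σ y)
  have hs := steps0_spec hy
  have hs' := steps0_spec hy'
  obtain ⟨k, hk⟩ : ∃ k, steps0 σ a y = k + 1 := by
    rcases Nat.eq_zero_or_pos (steps0 σ a y) with h | h
    · rw [h] at hs; exact absurd hs hay
    · exact ⟨steps0 σ a y - 1, by omega⟩
  have hk1 : steps0 σ a (σ⁻¹ y) ≤ k := by
    apply steps0_le
    rw [hk, pow_succ', Equiv.Perm.mul_apply] at hs
    rw [← hs]; simp
  have hk2 : steps0 σ a y ≤ steps0 σ a (σ⁻¹ y) + 1 := by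
    apply steps0_le
    rw [pow_succ', Equiv.Perm.mul_apply, hs']; simp
  have hk3 : steps0 σ a (σ⁻¹ y) = k := by omega
  rw [hs_eq, Lfun_add, Lfun_e p ε hb hy, Lfun_e p ε hb hy', if_pos hle, if_pos (by omega), h1,
    hk, hk3]
  have : (0 : ℚ) ≤ (p : ℚ) ^ (k + 1) := by positivity
  have h3 : (0 : ℚ) ≤ (p : ℚ) ^ (k + 1) * (1 + ε (σ⁻¹ y)) := mul_nonneg this (by linarith)
  calc (0 : ℚ) ≤ _ := h3
    _ = _ := by ring

lemma hs_term {σ : Equiv.Perm B} (p : ℕ) (ε : B → ℚ) {y : B} (hne : y ≠ σ⁻¹ y)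
    (h1 : ε y = -1) (h2 : ε (σ⁻¹ y) = 1) (x : B) : 0 ≤ ε x * hsimple σ p y x := by
  simp only [hs_eq, e, Pi.add_apply, Pi.smul_apply, smul_eq_mul]
  generalize σ⁻¹ y = z at *
  by_cases hx : x = y
  · subst hx; simp [hne, h1]
  · by_cases hx' : x = z
    · subst hx'; simp [hx, h2]
    · simp [hx, hx']

/-- the vector `f_w` for `w ∉ T̃` is nonnegative on suitable functionals. -/
lemma Lf_nonneg {σ : Equiv.Perm B} {p : ℕ} (hp : 1 ≤ p) (ε : B → ℚ) {a b w : B} (n : ℕ)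
    (hb : sameOrbit σ a b) (hw : sameOrbit σ a w) (hle : steps0 σ a w ≤ steps0 σ a b)
    (h1 : ε w = 1) (h2 : ε ((σ ^ n) w) ≤ 1) :
    0 ≤ Lfun σ p ε a b (-(e ((σ ^ n) w)) + ((p : ℚ) ^ n) • e w) := by
  have hz : sameOrbit σ a ((σ ^ n) w) := so_trans hw (so_pow σ w n)
  have hzle : steps0 σ a ((σ ^ n) w) ≤ n + steps0 σ a w := by
    apply steps0_le
    rw [pow_add, Equiv.Perm.mul_apply, steps0_spec hw]
  have hp' : (1 : ℚ) ≤ p := by exact_mod_cast hp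
  have hpw : (p : ℚ) ^ steps0 σ a ((σ ^ n) w) ≤ (p : ℚ) ^ (n + steps0 σ a w) :=
    pow_le_pow_right₀ hp' hzle
  have hpos : (0 : ℚ) ≤ (p : ℚ) ^ steps0 σ a ((σ ^ n) w) := by positivity
  rw [show -(e ((σ ^ n) w)) + ((p : ℚ) ^ n) • e w =
    (-1 : ℚ) • e ((σ ^ n) w) + ((p : ℚ) ^ n) • e w by simp, Lfun_add, Lfun_e p ε hb hz,
    Lfun_e p ε hb hw, if_pos hle, h1, one_mul, ← pow_add]
  split_ifs
  · nlinarith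
  · linarith

end aux

end GO


open GO

theorem statement13 {B : Type*} [Fintype B] [DecidableEq B] [Nonempty B]
    (σ : Equiv.Perm B) (p : ℕ) (hp : p.Prime) (T : Set B) (β : B)
    (hβ : β ∈ GO.BT σ T)
    (s : ℕ) (r : Fin (s + 1) → ℕ) (hmono : StrictMono r)
    (hpos : ∀ i, 0 < r i) (hlt : ∀ i, r i < GO.nn σ T β)
    (hset : {τ : B | ∃ i, 0 < i ∧ i < GO.nn σ T β ∧ τ = (σ ^ i) β} ∩ (GO.tilde σ T \ T)
      = {τ : B | ∃ i : Fin (s + 1), τ = (σ ^ r i) β}) :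
    GO.hsimple σ p ((σ ^ r (Fin.last s)) β) ∈ GO.Df σ p T β ∧
    GO.fvec σ p T ((σ ^ GO.nn σ T β) β) ∈ GO.Df σ p T β := by
  obtain ⟨hβT, hne, hns⟩ := hβ
  have hr0 := hpos (Fin.last s)
  have hrn := hlt (Fin.last s)
  have hy : (σ ^ r (Fin.last s)) β ∈ tilde σ T \ T := by
    have : (σ ^ r (Fin.last s)) β ∈ {τ : B | ∃ i : Fin (s + 1), τ = (σ ^ r i) β} := ⟨_, rfl⟩
    rw [← hset] at this
    exact this.2
  generalize r (Fin.last s) = k at hr0 hrn hy ⊢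
  clear hset hpos hlt hmono r s
  have hnn : ∀ i, 0 < i → i < nn σ T β → (σ ^ i) β ∈ tilde σ T := by
    intro i hi hi'
    by_contra h
    exact Nat.notMem_of_lt_sInf hi' ⟨hi, h⟩
  -- no early return
  have hret : ∀ i, 0 < i → i ≤ nn σ T β → (σ ^ i) β ≠ β := by
    intro i hi hi' h
    obtain ⟨x, hx, hxβ⟩ : ∃ x ∈ orbit σ β \ tilde σ T, x ≠ β := by
      by_contra hcon
      push Not at hcon
      exact hns ((Set.Nonempty.subset_singleton_iff hne).1 hcon)
    obtain ⟨⟨j, rfl⟩, hxt⟩ := hx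
    have hm := pow_mod' σ h j
    have hml := Nat.mod_lt j hi
    rcases Nat.eq_zero_or_pos (j % i) with h0 | h0
    · rw [h0] at hm; exact hxβ hm.symm
    · exact hxt (hm ▸ hnn _ h0 (by omega))
  have hn0 : 0 < nn σ T β := by omega
  have hwt : (σ ^ nn σ T β) β ∉ tilde σ T :=
    (Nat.sInf_mem (s := {i : ℕ | 0 < i ∧ (σ ^ i) β ∉ tilde σ T})
      (Nat.nonempty_of_pos_sInf hn0)).2
  have hwβ := hret _ hn0 le_rfl
  have hyβ := hret k hr0 hrn.le
  have hβw : sameOrbit σ β ((σ ^ nn σ T β) β) := so_pow _ _ _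
  have hβy : sameOrbit σ β ((σ ^ k) β) := so_pow _ _ _
  have hwle : steps0 σ β ((σ ^ nn σ T β) β) ≤ nn σ T β := steps0_le rfl
  have hyle : steps0 σ β ((σ ^ k) β) ≤ k := steps0_le rfl
  have hwT : (σ ^ nn σ T β) β ∉ T := fun h => hwt (Or.inl h)
  -- range of the functional for `τ = β ∉ T̃`
  have hβb : sameOrbit σ β (σ⁻¹ ((σ ^ mu σ T ((σ ^ nn σ T β) β)) ((σ ^ nn σ T β) β))) :=
    so_trans (so_trans hβw (so_pow _ _ _)) (so_inv _ _)
  have hrange : nn σ T β ≤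
      steps0 σ β (σ⁻¹ ((σ ^ mu σ T ((σ ^ nn σ T β) β)) ((σ ^ nn σ T β) β))) := by
    have hs := steps0_spec hβb
    set q := steps0 σ β (σ⁻¹ ((σ ^ mu σ T ((σ ^ nn σ T β) β)) ((σ ^ nn σ T β) β)))
    have hs1 : (σ ^ (q + 1)) β = (σ ^ mu σ T ((σ ^ nn σ T β) β)) ((σ ^ nn σ T β) β) := by
      rw [pow_succ', Equiv.Perm.mul_apply, hs]; simp
    by_contra hq
    rcases lt_trichotomy (q + 1) (mu σ T ((σ ^ nn σ T β) β)) with h | h | h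
    · have := pow_cancel σ h.le hs1
      exact hβT (this.symm ▸ mu_lt hwT (by omega) (by omega))
    · rw [← h] at hs1
      exact hwβ ((σ ^ (q + 1)).injective hs1).symm
    · have h0 := (mu_spec (σ := σ) hwT).1
      have h1 := pow_cancel σ h.le hs1.symm
      have h2 := pow_cancel σ (show q + 1 - mu σ T ((σ ^ nn σ T β) β) ≤ nn σ T β by omega) h1.symm
      exact hret _ (by omega) (by omega) h2.symm
  generalize hyd : (σ ^ k) β = y at *
  generalize hwd : (σ ^ nn σ T β) β = w at *
  have hyy : y ≠ σ⁻¹ y := by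
    intro h
    have h1 : (σ ^ 1) y = y := by
      rw [pow_one]; nth_rewrite 1 [h]; simp
    obtain ⟨j, hj⟩ := so_symm hβy
    have := pow_mod' σ h1 j
    rw [Nat.mod_one, hj] at this
    exact hyβ this
  have hey : epsTf σ T β y = -1 := by rw [epsf_ne hβT hy.2 hyβ, eps_tilde hy.1 hy.2]
  have hew : epsTf σ T β w = 1 := by rw [epsf_ne hβT hwT hwβ, eps_not hwt]
  have hepre := epsf_pre (σ := σ) hβT hy.2
  have hepre' : -1 ≤ epsTf σ T β (σ⁻¹ y) := by
    rcases hepre with h | h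
    · rw [h]; norm_num
    · rw [h.1]
  constructor
  · -- the `h` vector
    have main : ∀ τ, τ ∉ T → τ ≠ β →
        0 ≤ Lfun1 σ p (epsTf σ T β) ((σ ^ mu σ T τ) τ) (hsimple σ p y) := by
      intro τ hτ hτβ
      rcases hepre with h | ⟨h, hyμ⟩
      · exact Lfun_nonneg _ _ _ _ _ _ fun i _ => hs_term p _ hyy hey h _
      · have hsy : (σ ^ mu σ T τ) τ ≠ y := by
          intro h'
          exact hτβ (mu_inj hτ hβT (h'.trans hyμ))
        by_cases hso : sameOrbit σ ((σ ^ mu σ T τ) τ) y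
        · exact Lhs_nonneg p _ (so_inv _ _) hso hsy (steps0_le_inv hso) hey hepre'
        · apply Lfun_nonneg
          intro i _
          have n1 : (σ ^ i) ((σ ^ mu σ T τ) τ) ≠ y := fun h' => hso ⟨i, h'⟩
          have n2 : (σ ^ i) ((σ ^ mu σ T τ) τ) ≠ σ⁻¹ y := fun h' =>
            hso (so_trans ⟨i, h'⟩ (so_symm (so_inv σ y)))
          simp only [hs_eq, e, Pi.add_apply, Pi.smul_apply, if_neg n1, if_neg n2]
          simp
    intro τ hτ hτw
    rw [LTf, hwd]
    split_ifs with h1 h2 h3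
    · exact main w hwT hwβ
    · exact Lhs_nonneg p _ hβb hβy hyβ.symm (by omega) hey hepre'
    · rw [GO.LT, if_pos h3]
      refine Lfun_nonneg _ _ _ _ _ _ fun i _ => hs_term p _ hyy (eps_tilde hy.1 hy.2) ?_ _
      exact eps_pre (by simpa using hy.2)
    · exact main τ hτ h1
  · -- the `f` vector
    have hf : fvec σ p T w = fH σ p T w := by
      rw [fvec, if_neg (orb_not ⟨w, ⟨0, rfl⟩, hwt⟩), if_neg hwt]
    rw [hf, fH]
    have hzt : (σ ^ nn σ T w) w ∉ tilde σ T := by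
      obtain ⟨n, hn, h⟩ := exists_period σ w
      exact (Nat.sInf_mem (s := {i : ℕ | 0 < i ∧ (σ ^ i) w ∉ tilde σ T})
        ⟨n, hn, by rwa [h]⟩).2
    generalize nn σ T w = n' at *
    have hez : epsTf σ T β ((σ ^ n') w) ≤ 1 := epsf_le hzt
    have main : ∀ a, 0 ≤ Lfun1 σ p (epsTf σ T β) a (-(e ((σ ^ n') w)) + ((p : ℚ) ^ n') • e w) := by
      intro a
      by_cases hso : sameOrbit σ a w
      · exact Lf_nonneg hp.one_le _ n' (so_inv _ _) hso (steps0_le_inv hso) hew hez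
      · apply Lfun_nonneg
        intro i _
        have n1 : (σ ^ i) a ≠ w := fun h' => hso ⟨i, h'⟩
        have n2 : (σ ^ i) a ≠ (σ ^ n') w := fun h' =>
          hso (so_trans ⟨i, h'⟩ (so_symm (so_pow σ w n')))
        simp [e, n1, n2]
    intro τ hτ hτw
    rw [LTf, hwd]
    split_ifs with h1 h2 h3
    · exact main _
    · exact Lf_nonneg hp.one_le _ n' hβb hβw (by omega) hew hez
    · rw [GO.LT, if_pos h3]
      apply Lfun_nonneg
      intro i hi
      have hi2 : i ≤ mu σ T τ - 1 := hi.trans (steps0_le rfl)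
      have hm := (mu_spec (σ := σ) hτ).1
      have hit : (σ ^ i) τ ∈ tilde σ T := by
        rcases Nat.eq_zero_or_pos i with rfl | h0
        · exact h3
        · exact Or.inl (mu_lt hτ h0 (by omega))
      have n1 : (σ ^ i) τ ≠ w := fun h' => hwt (h' ▸ hit)
      have n2 : (σ ^ i) τ ≠ (σ ^ n') w := fun h' => hzt (h' ▸ hit)
      simp [e, n1, n2]
    · exact main _
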